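/- arXiv:1311.2740 — 2 statements merged into one kernel-verified Lean document; each statement's English description precedes it below -/
import Mathlib

section
/- Suppose a design d and a real number x satisfy: (i) ∑_{s∈Q} p_s [Ĉ_{s11} + x Ĉ_{s12}] = (y*/(t−1)) B_t; (ii) ∑_{s∈Q} p_s [Ĉ_{s21} + x Ĉ_{s22}] = 0; (iii) ∑_{s∈Q} p_s B̃ (T_s + x F_s) B_t = 0; (iv) ∑_{s∈Q} p_s = 1; (v) p_s = 0 for every s ∉ Q. Then x = x*. -/
open Matrix MeasureTheory
open scoped Classical

noncomputable section

/-- A treatment sequence: assigns a treatment in `Fin t` to each period in `Fin p`. -/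
abbrev TrtSeq (p t : ℕ) := Fin p → Fin t

/-- Treatment/period incidence matrix `T_s`. -/
def Tmat {p t : ℕ} (s : TrtSeq p t) : Matrix (Fin p) (Fin t) ℝ :=
  Matrix.of fun k i => if s k = i then 1 else 0

/-- Carryover incidence matrix `F_s`: first row zero, row `k` records the treatment
in period `k-1`. -/
def Fmat {p t : ℕ} (s : TrtSeq p t) : Matrix (Fin p) (Fin t) ℝ :=
  Matrix.of fun k i =>
    if (k : ℕ) = 0 then 0
    else if s ⟨(k : ℕ) - 1, Nat.lt_of_le_of_lt (Nat.sub_le _ _) k.isLt⟩ = i then 1 else 0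

/-- The all-ones `m × m` matrix `J_m`. -/
def Jmat (m : ℕ) : Matrix (Fin m) (Fin m) ℝ := Matrix.of fun _ _ => 1

/-- `B_t = I_t - J_t / t`. -/
def Bmat (t : ℕ) : Matrix (Fin t) (Fin t) ℝ := 1 - ((t : ℝ))⁻¹ • Jmat t

/-- `B̃ = Σ⁻¹ - Σ⁻¹ J_p Σ⁻¹ / (1_p' Σ⁻¹ 1_p)`. -/
def Btil {p : ℕ} (S : Matrix (Fin p) (Fin p) ℝ) : Matrix (Fin p) (Fin p) ℝ :=
  S⁻¹ - (((fun _ => (1 : ℝ)) : Fin p → ℝ) ⬝ᵥ (S⁻¹ *ᵥ fun _ => (1 : ℝ)))⁻¹ •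
    (S⁻¹ * Jmat p * S⁻¹)

/-- `G_1(s) = T_s`, `G_2(s) = F_s`. -/
def Gmat {p t : ℕ} (i : Fin 2) (s : TrtSeq p t) : Matrix (Fin p) (Fin t) ℝ :=
  if i = 0 then Tmat s else Fmat s

/-- An approximate design: nonnegative weights summing to one. -/
def IsDesign {p t : ℕ} (w : TrtSeq p t → ℝ) : Prop :=
  (∀ s, 0 ≤ w s) ∧ ∑ s : TrtSeq p t, w s = 1

/-- `Ĉ_{sij} = B_t G_i(s)' B̃ G_j(s) B_t`. -/
def Chat {p t : ℕ} (S : Matrix (Fin p) (Fin p) ℝ) (s : TrtSeq p t) (i j : Fin 2) :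
    Matrix (Fin t) (Fin t) ℝ :=
  Bmat t * (Gmat i s)ᵀ * Btil S * Gmat j s * Bmat t

/-- `c_{sij} = tr Ĉ_{sij}`. -/
def cseq {p t : ℕ} (S : Matrix (Fin p) (Fin p) ℝ) (s : TrtSeq p t) (i j : Fin 2) : ℝ :=
  (Chat S s i j).trace

/-- `Ĉ_{dij} = n ∑_s p_s Ĉ_{sij}`. -/
def ChatD {p t : ℕ} (n : ℕ) (S : Matrix (Fin p) (Fin p) ℝ) (w : TrtSeq p t → ℝ)
    (i j : Fin 2) : Matrix (Fin t) (Fin t) ℝ :=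
  (n : ℝ) • ∑ s : TrtSeq p t, w s • Chat S s i j

/-- `C_{dij} = Ĉ_{dij} - n (∑_s p_s G_i(s) B_t)' B̃ (∑_s p_s G_j(s) B_t)`. -/
def CD {p t : ℕ} (n : ℕ) (S : Matrix (Fin p) (Fin p) ℝ) (w : TrtSeq p t → ℝ)
    (i j : Fin 2) : Matrix (Fin t) (Fin t) ℝ :=
  ChatD n S w i j -
    (n : ℝ) • ((∑ s : TrtSeq p t, w s • (Gmat i s * Bmat t))ᵀ * Btil S *
      (∑ s : TrtSeq p t, w s • (Gmat j s * Bmat t)))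

/-- `c_{dij} = tr Ĉ_{dij} = n ∑_s p_s c_{sij}`. -/
def cD {p t : ℕ} (n : ℕ) (S : Matrix (Fin p) (Fin p) ℝ) (w : TrtSeq p t → ℝ)
    (i j : Fin 2) : ℝ :=
  (ChatD n S w i j).trace

/-- Fisher information matrix `C_{d,τ0,λ0}` for the direct treatment effects under the
proportional model. -/
def CInfo {p t : ℕ} (n : ℕ) (S : Matrix (Fin p) (Fin p) ℝ) (w : TrtSeq p t → ℝ)
    (τ0 : Fin t → ℝ) (l0 : ℝ) : Matrix (Fin t) (Fin t) ℝ :=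
  CD n S w 0 0 + l0 • (CD n S w 0 1 + CD n S w 1 0) + (l0 ^ 2) • CD n S w 1 1 -
    (τ0 ⬝ᵥ (CD n S w 1 1 *ᵥ τ0))⁻¹ •
      ((CD n S w 0 1 + l0 • CD n S w 1 1) * vecMulVec τ0 τ0 *
        (CD n S w 1 0 + l0 • CD n S w 1 1))

/-- Permutation matrix `S_σ` with `(S_σ)_{j,i} = 1` iff `i = σ j`. -/
def Smat {t : ℕ} (σ : Equiv.Perm (Fin t)) : Matrix (Fin t) (Fin t) ℝ :=
  Matrix.of fun j i => if i = σ j then 1 else 0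

/-- The relabelled sequence `σ ∘ s`. -/
def permSeq {p t : ℕ} (σ : Equiv.Perm (Fin t)) (s : TrtSeq p t) : TrtSeq p t := fun k => σ (s k)

/-- The design `σ d`, with weights `(σd)_s = p_{σ⁻¹ ∘ s}`. -/
def permDesign {p t : ℕ} (σ : Equiv.Perm (Fin t)) (w : TrtSeq p t → ℝ) : TrtSeq p t → ℝ :=
  fun s => w (permSeq σ⁻¹ s)

/-- A design is symmetric if its weights are invariant under treatment relabelling. -/
def IsSymmetricDesign {p t : ℕ} (w : TrtSeq p t → ℝ) : Prop :=
  ∀ (σ : Equiv.Perm (Fin t)) (s : TrtSeq p t), w (permSeq σ s) = w s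

/-- The symmetrized design `d*` with weights `p*_s = (1/t!) ∑_σ p_{σ⁻¹ ∘ s}`. -/
def symmetrize {p t : ℕ} (w : TrtSeq p t → ℝ) : TrtSeq p t → ℝ :=
  fun s => ((Nat.factorial t : ℝ))⁻¹ * ∑ σ : Equiv.Perm (Fin t), permDesign σ w s

/-- `q_s(x) = c_{s11} + 2 c_{s12} x + c_{s22} x²`. -/
def qSeq {p t : ℕ} (S : Matrix (Fin p) (Fin p) ℝ) (s : TrtSeq p t) (x : ℝ) : ℝ :=
  cseq S s 0 0 + 2 * cseq S s 0 1 * x + cseq S s 1 1 * x ^ 2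

/-- `q(x) = max_{s ∈ S} q_s(x)`. -/
def qMax (p t : ℕ) (S : Matrix (Fin p) (Fin p) ℝ) (x : ℝ) : ℝ :=
  sSup (Set.range fun s : TrtSeq p t => qSeq S s x)

/-- `y* = inf_x q(x)`. -/
def yStar (p t : ℕ) (S : Matrix (Fin p) (Fin p) ℝ) : ℝ := ⨅ x : ℝ, qMax p t S x

/-- `q_d(x) = ∑_s p_s q_s(x)`. -/
def qD {p t : ℕ} (S : Matrix (Fin p) (Fin p) ℝ) (w : TrtSeq p t → ℝ) (x : ℝ) : ℝ :=
  ∑ s : TrtSeq p t, w s * qSeq S s x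

/-- `x_d = -c_{d12}/c_{d22}`. -/
def xD {p t : ℕ} (n : ℕ) (S : Matrix (Fin p) (Fin p) ℝ) (w : TrtSeq p t → ℝ) : ℝ :=
  -(cD n S w 0 1) / cD n S w 1 1

/-- An exchangeable prior: a probability measure on `{τ : 1'τ = 0, τ ≠ 0}` that is
invariant under all coordinate permutations of `ℝ^t`. -/
def IsExchangeablePrior {t : ℕ} (g : Measure (Fin t → ℝ)) : Prop :=
  IsProbabilityMeasure g ∧
    g {τ : Fin t → ℝ | ¬((∑ i, τ i) = 0 ∧ τ ≠ 0)} = 0 ∧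
    ∀ σ : Equiv.Perm (Fin t), Measure.map (fun τ i => τ (σ i)) g = g

/-- `m_d(τ0) = min {ℓ' C_{d,τ0,λ0} ℓ : 1'ℓ = 0, ℓ'ℓ = 1}`. -/
def mD {p t : ℕ} (n : ℕ) (S : Matrix (Fin p) (Fin p) ℝ) (w : TrtSeq p t → ℝ) (l0 : ℝ)
    (τ0 : Fin t → ℝ) : ℝ :=
  sInf {v : ℝ | ∃ l : Fin t → ℝ, (∑ i, l i) = 0 ∧ l ⬝ᵥ l = 1 ∧
    v = l ⬝ᵥ (CInfo n S w τ0 l0 *ᵥ l)}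

/-- The E-criterion value `E_{g,λ0}(d) = ∫ m_d(τ0) g(dτ0)`. -/
def Ecrit {p t : ℕ} (n : ℕ) (S : Matrix (Fin p) (Fin p) ℝ) (g : Measure (Fin t → ℝ))
    (l0 : ℝ) (w : TrtSeq p t → ℝ) : ℝ :=
  ∫ τ0, mD n S w l0 τ0 ∂g

/-- Competing designs for E-optimality: designs with a.e. positive `τ0' C_{d22} τ0`
and `g`-integrable `m_d`. -/
def EAdmissible {p t : ℕ} (n : ℕ) (S : Matrix (Fin p) (Fin p) ℝ) (g : Measure (Fin t → ℝ))
    (l0 : ℝ) (w : TrtSeq p t → ℝ) : Prop :=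
  IsDesign w ∧ (∀ᵐ τ0 ∂g, 0 < τ0 ⬝ᵥ (CD n S w 1 1 *ᵥ τ0)) ∧
    Integrable (mD n S w l0) g

/-- `d` is `E_{g,λ0}`-optimal. -/
def EOptimal {p t : ℕ} (n : ℕ) (S : Matrix (Fin p) (Fin p) ℝ) (g : Measure (Fin t → ℝ))
    (l0 : ℝ) (w : TrtSeq p t → ℝ) : Prop :=
  ∀ w' : TrtSeq p t → ℝ, EAdmissible n S g l0 w' → Ecrit n S g l0 w' ≤ Ecrit n S g l0 w

/-- A pseudo symmetric design: treatments equireplicated in each period,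
and all `C_{dij}` completely symmetric. -/
def IsPseudoSymmetric {p t : ℕ} (n : ℕ) (S : Matrix (Fin p) (Fin p) ℝ)
    (w : TrtSeq p t → ℝ) : Prop :=
  (∀ (k : Fin p) (i : Fin t),
    (∑ s ∈ Finset.univ.filter fun s : TrtSeq p t => s k = i, w s) = 1 / (t : ℝ)) ∧
  ∀ i j : Fin 2, ∃ a b : ℝ, CD n S w i j = a • (1 : Matrix (Fin t) (Fin t) ℝ) + b • Jmat t

/-- Eigenvalues of a (Hermitian) matrix sorted increasingly with multiplicity. -/
def sortedEigs {t : ℕ} (C : Matrix (Fin t) (Fin t) ℝ) : Fin t → ℝ :=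
  if h : C.IsHermitian then (fun i => h.eigenvalues (Tuple.sort h.eigenvalues i))
  else fun _ => 0

/-- `Φ_D(C) = (∏_{i=1}^{t-1} a_i)^{1/(t-1)}` (eigenvalues sorted increasingly). -/
def PhiD {t : ℕ} (C : Matrix (Fin t) (Fin t) ℝ) : ℝ :=
  (∏ i ∈ Finset.univ.filter fun i : Fin t => (i : ℕ) ≠ 0, sortedEigs C i) ^ (((t : ℝ) - 1)⁻¹)

/-- `Φ_A(C) = (t-1)(∑_{i=1}^{t-1} a_i⁻¹)⁻¹` if `a_1 > 0`, else `0`. -/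
def PhiA {t : ℕ} (C : Matrix (Fin t) (Fin t) ℝ) : ℝ :=
  if ∀ i : Fin t, (i : ℕ) ≠ 0 → 0 < sortedEigs C i then
    ((t : ℝ) - 1) *
      (∑ i ∈ Finset.univ.filter fun i : Fin t => (i : ℕ) ≠ 0, (sortedEigs C i)⁻¹)⁻¹
  else 0

/-- `Φ_T(C) = tr(C)/(t-1)`. -/
def PhiT {t : ℕ} (C : Matrix (Fin t) (Fin t) ℝ) : ℝ := C.trace / ((t : ℝ) - 1)

/-- The criterion value `∫ Φ(C_{d,τ0,λ0}) g(dτ0)`. -/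
def PhiCrit {p t : ℕ} (n : ℕ) (S : Matrix (Fin p) (Fin p) ℝ)
    (Phi : Matrix (Fin t) (Fin t) ℝ → ℝ) (g : Measure (Fin t → ℝ)) (l0 : ℝ)
    (w : TrtSeq p t → ℝ) : ℝ :=
  ∫ τ0, Phi (CInfo n S w τ0 l0) ∂g

/-- Competing designs for a `Φ`-criterion. -/
def PhiAdmissible {p t : ℕ} (n : ℕ) (S : Matrix (Fin p) (Fin p) ℝ)
    (Phi : Matrix (Fin t) (Fin t) ℝ → ℝ) (g : Measure (Fin t → ℝ)) (l0 : ℝ)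
    (w : TrtSeq p t → ℝ) : Prop :=
  IsDesign w ∧ (∀ᵐ τ0 ∂g, 0 < τ0 ⬝ᵥ (CD n S w 1 1 *ᵥ τ0)) ∧
    Integrable (fun τ0 => Phi (CInfo n S w τ0 l0)) g

/-- `d` is `Φ_{g,λ0}`-optimal. -/
def PhiOptimal {p t : ℕ} (n : ℕ) (S : Matrix (Fin p) (Fin p) ℝ)
    (Phi : Matrix (Fin t) (Fin t) ℝ → ℝ) (g : Measure (Fin t → ℝ)) (l0 : ℝ)
    (w : TrtSeq p t → ℝ) : Prop :=
  ∀ w' : TrtSeq p t → ℝ, PhiAdmissible n S Phi g l0 w' →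
    PhiCrit n S Phi g l0 w' ≤ PhiCrit n S Phi g l0 w

/-- `H_1(s) = F_s`, `H_2(s) = T_s + λ0 F_s` (for estimating `λ`). -/
def Hmat {p t : ℕ} (l0 : ℝ) (i : Fin 2) (s : TrtSeq p t) : Matrix (Fin p) (Fin t) ℝ :=
  if i = 0 then Fmat s else Tmat s + l0 • Fmat s

/-- `Â_{sij} = B_t H_i(s)' B̃ H_j(s) B_t`. -/
def Ahat {p t : ℕ} (S : Matrix (Fin p) (Fin p) ℝ) (l0 : ℝ) (s : TrtSeq p t) (i j : Fin 2) :
    Matrix (Fin t) (Fin t) ℝ :=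
  Bmat t * (Hmat l0 i s)ᵀ * Btil S * Hmat l0 j s * Bmat t

/-- `h_{sij} = tr Â_{sij}`. -/
def hseq {p t : ℕ} (S : Matrix (Fin p) (Fin p) ℝ) (l0 : ℝ) (s : TrtSeq p t) (i j : Fin 2) : ℝ :=
  (Ahat S l0 s i j).trace

/-- `Â_{dij} = n ∑_s p_s Â_{sij}`. -/
def AhatD {p t : ℕ} (n : ℕ) (S : Matrix (Fin p) (Fin p) ℝ) (l0 : ℝ) (w : TrtSeq p t → ℝ)
    (i j : Fin 2) : Matrix (Fin t) (Fin t) ℝ :=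
  (n : ℝ) • ∑ s : TrtSeq p t, w s • Ahat S l0 s i j

/-- `A_{dij} = Â_{dij} - n (∑_s p_s H_i(s) B_t)' B̃ (∑_s p_s H_j(s) B_t)`. -/
def AD {p t : ℕ} (n : ℕ) (S : Matrix (Fin p) (Fin p) ℝ) (l0 : ℝ) (w : TrtSeq p t → ℝ)
    (i j : Fin 2) : Matrix (Fin t) (Fin t) ℝ :=
  AhatD n S l0 w i j -
    (n : ℝ) • ((∑ s : TrtSeq p t, w s • (Hmat l0 i s * Bmat t))ᵀ * Btil S *
      (∑ s : TrtSeq p t, w s • (Hmat l0 j s * Bmat t)))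

/-- `G` is a generalized inverse of `A`. -/
def IsGInv {t : ℕ} (A G : Matrix (Fin t) (Fin t) ℝ) : Prop := A * G * A = A

/-- `A_d(G) = A_{d11} - A_{d12} G A_{d21}` with `A_{d21} = A_{d12}'`. -/
def ADfun {p t : ℕ} (n : ℕ) (S : Matrix (Fin p) (Fin p) ℝ) (l0 : ℝ) (w : TrtSeq p t → ℝ)
    (G : Matrix (Fin t) (Fin t) ℝ) : Matrix (Fin t) (Fin t) ℝ :=
  AD n S l0 w 0 0 - AD n S l0 w 0 1 * G * (AD n S l0 w 0 1)ᵀ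

/-- `r_s(x) = h_{s11} + 2 h_{s12} x + h_{s22} x²`. -/
def rSeq {p t : ℕ} (S : Matrix (Fin p) (Fin p) ℝ) (l0 : ℝ) (s : TrtSeq p t) (x : ℝ) : ℝ :=
  hseq S l0 s 0 0 + 2 * hseq S l0 s 0 1 * x + hseq S l0 s 1 1 * x ^ 2

/-- `r(x) = max_s r_s(x)`. -/
def rMax (p t : ℕ) (S : Matrix (Fin p) (Fin p) ℝ) (l0 : ℝ) (x : ℝ) : ℝ :=
  sSup (Set.range fun s : TrtSeq p t => rSeq S l0 s x)

/-- `y_0 = inf_x r(x)`. -/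
def yZero (p t : ℕ) (S : Matrix (Fin p) (Fin p) ℝ) (l0 : ℝ) : ℝ := ⨅ x : ℝ, rMax p t S l0 x

/-!
Taking traces turns (i) and (ii) into `∑ p_s (c_{s11} + x c_{s12}) = y*` and
`∑ p_s (c_{s12} + x c_{s22}) = 0`. Expanding each quadratic around `x`,
`q_s(z) = (c_{s11} + x c_{s12}) + (2z - x) (c_{s12} + x c_{s22}) + c_{s22} (z - x)²`,
so averaging over `Q` at `z = x*`, where every `q_s` equals `y*`, leaves
`(x* - x)² ∑ p_s c_{s22} = 0`. The coefficient is positive: `c_{s22}` is the trace of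
`(F_s B_t)' B̃ (F_s B_t)`, the form `B̃` vanishes only on constant vectors, and the column of
`F_s B_t` for the treatment of the first period is not constant.
-/

section WeightedQuadratics

variable {ι K : Type*} [CommRing K] [LinearOrder K] [IsStrictOrderedRing K]
  {Q : Finset ι} {w : ι → K}

lemma sum_mul_pos_of_sum_eq_one {c : ι → K} (hw : ∀ i ∈ Q, 0 ≤ w i) (hw_sum : ∑ i ∈ Q, w i = 1)
    (hc : ∀ i ∈ Q, 0 < c i) : 0 < ∑ i ∈ Q, w i * c i := by
  obtain ⟨i, hi, hwi⟩ : ∃ i ∈ Q, 0 < w i :=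
    Finset.exists_lt_of_sum_lt (by simp [hw_sum] : ∑ i ∈ Q, (0 : K) < ∑ i ∈ Q, w i)
  exact Finset.sum_pos' (fun j hj => mul_nonneg (hw j hj) (hc j hj).le)
    ⟨i, hi, mul_pos hwi (hc i hi)⟩

lemma eq_of_forall_quadratic_eq_of_sum_eq {a b c : ι → K} {x y z : K}
    (hw : ∀ i ∈ Q, 0 ≤ w i) (hw_sum : ∑ i ∈ Q, w i = 1) (hc : ∀ i ∈ Q, 0 < c i)
    (hz : ∀ i ∈ Q, a i + 2 * b i * z + c i * z ^ 2 = y)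
    (hvalue : ∑ i ∈ Q, w i * (a i + x * b i) = y)
    (hslope : ∑ i ∈ Q, w i * (b i + x * c i) = 0) : x = z := by
  have hmean : ∑ i ∈ Q, w i * (a i + 2 * b i * z + c i * z ^ 2) = y := by
    rw [Finset.sum_congr rfl fun i hi => by rw [hz i hi], ← Finset.sum_mul, hw_sum, one_mul]
  have hexpand : ∑ i ∈ Q, w i * (a i + 2 * b i * z + c i * z ^ 2) =
      ∑ i ∈ Q, w i * (a i + x * b i) + (2 * z - x) * ∑ i ∈ Q, w i * (b i + x * c i) +
        (z - x) ^ 2 * ∑ i ∈ Q, w i * c i := by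
    simp only [Finset.mul_sum, ← Finset.sum_add_distrib]
    exact Finset.sum_congr rfl fun i _ => by ring
  have hsq : (z - x) ^ 2 * ∑ i ∈ Q, w i * c i = 0 := by
    linear_combination hmean - hexpand - hvalue - (2 * z - x) * hslope
  have hpos := sum_mul_pos_of_sum_eq_one hw hw_sum hc
  exact (sub_eq_zero.mp (pow_eq_zero_iff two_ne_zero |>.mp
    ((mul_eq_zero.mp hsq).resolve_right hpos.ne'))).symm

end WeightedQuadratics

section QuadraticForms

variable {m : Type*} [Fintype m] {A : Matrix m m ℝ}

/-- The deflation `A - (A u)(A u)' / (u' A u)` of a symmetric matrix `A` along `u`: the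
quadratic form `A` evaluated on the component of a vector that is `A`-orthogonal to `u`. The
matrix `B̃` is the deflation of `Σ⁻¹` along `1_p`. When `u' A u = 0`, it is `A` itself. -/
def deflation (A : Matrix m m ℝ) (u : m → ℝ) : Matrix m m ℝ :=
  A - (u ⬝ᵥ (A *ᵥ u))⁻¹ • vecMulVec (A *ᵥ u) (A *ᵥ u)

lemma isSymm_deflation (hA : A.IsSymm) (u : m → ℝ) : (deflation A u).IsSymm :=
  hA.sub (IsSymm.smul (transpose_vecMulVec _ _) _)

lemma dotProduct_deflation_mulVec (hA : A.IsSymm) (u v : m → ℝ) :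
    v ⬝ᵥ (deflation A u *ᵥ v) =
      (v - ((u ⬝ᵥ (A *ᵥ v)) / (u ⬝ᵥ (A *ᵥ u))) • u) ⬝ᵥ
        (A *ᵥ (v - ((u ⬝ᵥ (A *ᵥ v)) / (u ⬝ᵥ (A *ᵥ u))) • u)) := by
  have hvu : v ⬝ᵥ (A *ᵥ u) = u ⬝ᵥ (A *ᵥ v) := by
    rw [dotProduct_mulVec, ← mulVec_transpose, hA.eq, dotProduct_comm]
  have hAuv : (A *ᵥ u) ⬝ᵥ v = u ⬝ᵥ (A *ᵥ v) := by rw [dotProduct_comm, hvu]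
  simp only [deflation, sub_mulVec, smul_mulVec, vecMulVec_mulVec, op_smul_eq_smul, mulVec_sub,
    mulVec_smul, sub_dotProduct, dotProduct_sub, smul_dotProduct, dotProduct_smul, smul_eq_mul,
    hvu, hAuv]
  rcases eq_or_ne (u ⬝ᵥ (A *ᵥ u)) 0 with hu | hu
  · simp [hu]
  · field_simp
    ring

lemma posSemidef_deflation (hA : A.PosSemidef) (u : m → ℝ) : (deflation A u).PosSemidef := by
  have hA_symm : A.IsSymm := isHermitian_iff_isSymm.mp hA.isHermitian
  refine .of_dotProduct_mulVec_nonneg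
    (isHermitian_iff_isSymm.mpr (isSymm_deflation hA_symm u)) fun v => ?_
  rw [star_trivial, dotProduct_deflation_mulVec hA_symm]
  exact hA.dotProduct_mulVec_nonneg _

lemma dotProduct_deflation_mulVec_pos (hA : A.PosDef) {u v : m → ℝ} (hv : ∀ a : ℝ, v ≠ a • u) :
    0 < v ⬝ᵥ (deflation A u *ᵥ v) := by
  rw [dotProduct_deflation_mulVec (isHermitian_iff_isSymm.mp hA.isHermitian)]
  exact hA.dotProduct_mulVec_pos (sub_ne_zero.mpr (hv _))

lemma trace_transpose_mul_mul_pos {l : Type*} [Fintype l] (hA : A.PosSemidef) (X : Matrix m l ℝ)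
    (j : l) (hj : 0 < X.col j ⬝ᵥ (A *ᵥ X.col j)) : 0 < (Xᵀ * A * X).trace := by
  have hX : (Xᵀ * A * X).PosSemidef := by
    simpa only [conjTranspose_eq_transpose_of_trivial] using hA.conjTranspose_mul_mul_same X
  have hdiag : (Xᵀ * A * X) j j = X.col j ⬝ᵥ (A *ᵥ X.col j) := by
    rw [Matrix.mul_assoc]
    rfl
  exact Finset.sum_pos' (fun _ _ => hX.diag_nonneg) ⟨j, Finset.mem_univ j, hj.trans_eq hdiag.symm⟩

end QuadraticForms

section Centering

lemma isSymm_Bmat (t : ℕ) : (Bmat t).IsSymm :=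
  isSymm_one.sub (IsSymm.smul (IsSymm.ext fun _ _ => rfl) _)

lemma trace_Bmat {t : ℕ} (ht : t ≠ 0) : (Bmat t).trace = (t : ℝ) - 1 := by
  have ht' : (t : ℝ) ≠ 0 := Nat.cast_ne_zero.mpr ht
  simp [Bmat, Jmat, Matrix.trace, ht']

lemma Btil_eq_deflation {p : ℕ} {S : Matrix (Fin p) (Fin p) ℝ} (hS : S.IsSymm) :
    Btil S = deflation S⁻¹ 1 := by
  have hJ : Jmat p = vecMulVec 1 1 := by ext; simp [Jmat, vecMulVec]
  have hvec : (1 : Fin p → ℝ) ᵥ* S⁻¹ = S⁻¹ *ᵥ 1 := by rw [← mulVec_transpose, hS.inv.eq]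
  rw [Btil, deflation, hJ, mul_vecMulVec, vecMulVec_mul, hvec]
  rfl

end Centering

section Information

variable {p t : ℕ} {S : Matrix (Fin p) (Fin p) ℝ}

lemma Chat_eq_transpose_mul_mul (S : Matrix (Fin p) (Fin p) ℝ) (s : TrtSeq p t) (i j : Fin 2) :
    Chat S s i j = (Gmat i s * Bmat t)ᵀ * Btil S * (Gmat j s * Bmat t) := by
  simp only [Chat, transpose_mul, (isSymm_Bmat t).eq, Matrix.mul_assoc]

lemma cseq_comm (hS : S.IsSymm) (s : TrtSeq p t) (i j : Fin 2) : cseq S s i j = cseq S s j i := by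
  have hB : (Btil S)ᵀ = Btil S := Btil_eq_deflation hS ▸ isSymm_deflation hS.inv 1
  rw [cseq, cseq, ← trace_transpose (Chat S s j i)]
  simp only [Chat_eq_transpose_mul_mul, transpose_mul, transpose_transpose, hB, Matrix.mul_assoc]

lemma Fmat_mul_apply_zero {l : Type*} (hp : 0 < p) (s : TrtSeq p t) (M : Matrix (Fin t) l ℝ)
    (j : l) : (Fmat s * M) ⟨0, hp⟩ j = 0 := by
  simp [mul_apply, Fmat]

lemma Fmat_mul_apply_succ {l : Type*} {k : ℕ} (hk : k + 1 < p) (s : TrtSeq p t)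
    (M : Matrix (Fin t) l ℝ) (j : l) :
    (Fmat s * M) ⟨k + 1, hk⟩ j = M (s ⟨k, by omega⟩) j := by
  simp [mul_apply, Fmat]

lemma Fmat_mul_Bmat_col_ne_const (hp : 2 ≤ p) (ht : 2 ≤ t) (s : TrtSeq p t) (a : ℝ) :
    (Fmat s * Bmat t).col (s ⟨0, by omega⟩) ≠ a • 1 := by
  intro h
  have ha : 0 = a := by
    simpa using (Fmat_mul_apply_zero _ s (Bmat t) _).symm.trans (congrFun h ⟨0, by omega⟩)
  have hdiag : 1 - (t : ℝ)⁻¹ = a := by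
    simpa [Fmat_mul_apply_succ, Bmat, Jmat] using congrFun h ⟨0 + 1, hp⟩
  have ht_inv : (t : ℝ)⁻¹ < 1 := inv_lt_one_of_one_lt₀ (by exact_mod_cast ht)
  linarith

lemma cseq_one_one_pos (hp : 2 ≤ p) (ht : 2 ≤ t) (hS : S.PosDef) (s : TrtSeq p t) :
    0 < cseq S s 1 1 := by
  rw [cseq, Chat_eq_transpose_mul_mul, Btil_eq_deflation (isHermitian_iff_isSymm.mp hS.isHermitian)]
  exact trace_transpose_mul_mul_pos (posSemidef_deflation hS.inv.posSemidef 1) _ _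
    (dotProduct_deflation_mulVec_pos hS.inv (Fmat_mul_Bmat_col_ne_const hp ht s))

lemma trace_sum_smul_Chat_add (S : Matrix (Fin p) (Fin p) ℝ) (Q : Finset (TrtSeq p t))
    (w : TrtSeq p t → ℝ) (x : ℝ) (i : Fin 2) :
    (∑ s ∈ Q, w s • (Chat S s i 0 + x • Chat S s i 1)).trace =
      ∑ s ∈ Q, w s * (cseq S s i 0 + x * cseq S s i 1) := by
  simp only [trace_sum, trace_smul, trace_add, smul_eq_mul, cseq]

end Information

theorem stmt9_general {p t : ℕ} (hp : 2 ≤ p) (ht : 2 ≤ t) {S : Matrix (Fin p) (Fin p) ℝ}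
    (hS : S.PosDef) {Q : Finset (TrtSeq p t)} {x₀ y : ℝ} (hQ : ∀ s ∈ Q, qSeq S s x₀ = y)
    {w : TrtSeq p t → ℝ} (hw : ∀ s ∈ Q, 0 ≤ w s) (hw_sum : ∑ s ∈ Q, w s = 1) {x : ℝ}
    (h1 : ∑ s ∈ Q, w s • (Chat S s 0 0 + x • Chat S s 0 1) = (y / ((t : ℝ) - 1)) • Bmat t)
    (h2 : ∑ s ∈ Q, w s • (Chat S s 1 0 + x • Chat S s 1 1) = 0) : x = x₀ := by
  have ht' : (t : ℝ) - 1 ≠ 0 := sub_ne_zero.mpr (by exact_mod_cast (by omega : t ≠ 1))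
  have hvalue : ∑ s ∈ Q, w s * (cseq S s 0 0 + x * cseq S s 0 1) = y := by
    rw [← trace_sum_smul_Chat_add, h1, trace_smul, trace_Bmat (by omega), smul_eq_mul,
      div_mul_cancel₀ _ ht']
  have hslope : ∑ s ∈ Q, w s * (cseq S s 0 1 + x * cseq S s 1 1) = 0 := by
    simp only [cseq_comm (isHermitian_iff_isSymm.mp hS.isHermitian) _ 0 1]
    rw [← trace_sum_smul_Chat_add, h2, trace_zero]
  exact eq_of_forall_quadratic_eq_of_sum_eq hw hw_sum (fun s _ => cseq_one_one_pos hp ht hS s)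
    hQ hvalue hslope

/-- the `x` appearing in the five optimality conditions must be `x*`. -/
theorem stmt9 (p t n : ℕ) (hp : 2 ≤ p) (ht : 3 ≤ t) (hn : 1 ≤ n)
    (S : Matrix (Fin p) (Fin p) ℝ) (hS : S.PosDef)
    (xstar : ℝ) (hxs : qMax p t S xstar = yStar p t S)
    (hxsu : ∀ x : ℝ, qMax p t S x = yStar p t S → x = xstar)
    (w : TrtSeq p t → ℝ) (hw : IsDesign w) (x : ℝ)
    (h1 : ∑ s ∈ Finset.univ.filter (fun s : TrtSeq p t => qSeq S s xstar = yStar p t S),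
        w s • (Chat S s 0 0 + x • Chat S s 0 1) = (yStar p t S / ((t : ℝ) - 1)) • Bmat t)
    (h2 : ∑ s ∈ Finset.univ.filter (fun s : TrtSeq p t => qSeq S s xstar = yStar p t S),
        w s • (Chat S s 1 0 + x • Chat S s 1 1) = 0)
    (h3 : ∑ s ∈ Finset.univ.filter (fun s : TrtSeq p t => qSeq S s xstar = yStar p t S),
        w s • (Btil S * (Tmat s + x • Fmat s) * Bmat t) = 0)
    (h4 : ∑ s ∈ Finset.univ.filter (fun s : TrtSeq p t => qSeq S s xstar = yStar p t S),
        w s = 1)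
    (h5 : ∀ s : TrtSeq p t, qSeq S s xstar ≠ yStar p t S → w s = 0) :
    x = xstar :=
  stmt9_general hp (by omega) hS (fun _ hs => (Finset.mem_filter.mp hs).2) (fun s _ => hw.1 s)
    h4 h1 h2
end
end

section
/- Suppose a design d satisfies Kushner's conditions for universal optimality under the traditional linear crossover model, namely: ∑_{s∈Q} p_s [Ĉ_{s11} + x* Ĉ_{s12}] = (y*/(t−1)) B_t; ∑_{s∈Q} p_s [Ĉ_{s21} + x* Ĉ_{s22}] = 0; ∑_{s∈Q} p_s B̃ (T_s + x* F_s) B_t = 0; ∑_{s∈Q} p_s = 1; and p_s = 0 for every s ∉ Q. Then for every λ0 ∈ ℝ and every exchangeable prior g, d is E_{g,λ0}-optimal for the proportional model. -/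
open Matrix MeasureTheory
open scoped Classical

noncomputable section

/-! The information about `τ0` under the proportional model is a Schur complement, so for every `x`
it is at most the information left when the carryover effects are known to be `x` times the direct
ones: `τ0' C_{d,τ0,λ0} τ0 ≤ τ0' (C_{d11} + x (C_{d12} + C_{d21}) + x² C_{d22}) τ0` for every `λ0`.
Testing the minimum `m_d(τ0)` on `τ0 / |τ0|` and dropping the period correction bounds it by the
Rayleigh quotient at `τ0` of `n ∑_s p_s B_t (T_s + x F_s)' B̃ (T_s + x F_s) B_t`. By exchangeability
`τ0 τ0' / |τ0|²` has mean `B_t / (t - 1)`, so this Rayleigh quotient averages to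
`n ∑_s p_s q_s(x) / (t - 1)`, which is at most `n y* / (t - 1)` for `x = x*`.

Kushner's conditions give `C_{d12} = -x* C_{d22}` and
`C_{d11} = (n y* / (t - 1)) B_t + x*² C_{d22}`. The information matrix then equals
`(n y* / (t - 1)) B_t` plus a positive semidefinite matrix that vanishes at `τ0`, and the bound is
attained. -/

section QuadraticForms

variable {k : Type*} [Fintype k]

lemma dotProduct_mulVec_comm_of_isSymm {A : Matrix k k ℝ} (hA : A.IsSymm) (u v : k → ℝ) :
    u ⬝ᵥ A *ᵥ v = v ⬝ᵥ A *ᵥ u := by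
  rw [← dotProduct_transpose_mulVec, hA.eq]

lemma dotProduct_mulVec_self_nonneg {A : Matrix k k ℝ} (hA : A.PosSemidef) (v : k → ℝ) :
    0 ≤ v ⬝ᵥ A *ᵥ v := by
  simpa only [star_trivial] using hA.dotProduct_mulVec_nonneg v

lemma dotProduct_mulVec_sq_le {A : Matrix k k ℝ} (hA : A.PosSemidef) (u v : k → ℝ) :
    (u ⬝ᵥ A *ᵥ v) ^ 2 ≤ (u ⬝ᵥ A *ᵥ u) * (v ⬝ᵥ A *ᵥ v) := by
  have hsymm : LinearMap.IsSymm (Matrix.toBilin' A) := ⟨fun x y => by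
    simpa only [Matrix.toBilin'_apply', RingHom.id_apply] using
      dotProduct_mulVec_comm_of_isSymm (isHermitian_iff_isSymm.1 hA.isHermitian) x y⟩
  simpa only [Matrix.toBilin'_apply'] using
    (Matrix.toBilin' A).apply_sq_le_of_symm
      (fun x => by simpa only [Matrix.toBilin'_apply'] using dotProduct_mulVec_self_nonneg hA x)
      hsymm u v

lemma dotProduct_self_pos_of_ne_zero {v : k → ℝ} (hv : v ≠ 0) : 0 < v ⬝ᵥ v := by
  simpa only [star_trivial] using dotProduct_star_self_pos_iff.2 hv

lemma dotProduct_transpose_mul_mul_mulVec {m : Type*} [Fintype m] (X Y : Matrix m k ℝ)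
    (M : Matrix m m ℝ) (u v : k → ℝ) :
    u ⬝ᵥ (Xᵀ * M * Y) *ᵥ v = (X *ᵥ u) ⬝ᵥ M *ᵥ (Y *ᵥ v) := by
  rw [← mulVec_mulVec, ← mulVec_mulVec, dotProduct_transpose_mulVec, dotProduct_comm]

end QuadraticForms

section Deflation

variable {k : Type*} [Fintype k]

/-- The rank-one deflation `A - A u u' A / (u' A u)`: the Schur complement left of the quadratic
form `A` after the direction `u` has been eliminated. If `u' A u = 0`, the division by zero makes
it `A` itself. -/
def deflate (A : Matrix k k ℝ) (u : k → ℝ) : Matrix k k ℝ :=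
  A - (u ⬝ᵥ A *ᵥ u)⁻¹ • (A * vecMulVec u u * A)

lemma dotProduct_deflate_mulVec {A : Matrix k k ℝ} (hA : A.IsSymm) (u v : k → ℝ) :
    v ⬝ᵥ deflate A u *ᵥ v = v ⬝ᵥ A *ᵥ v - (u ⬝ᵥ A *ᵥ u)⁻¹ * (v ⬝ᵥ A *ᵥ u) ^ 2 := by
  have hvAu : u ⬝ᵥ A *ᵥ v = v ⬝ᵥ A *ᵥ u := dotProduct_mulVec_comm_of_isSymm hA u v
  rw [deflate, sub_mulVec, smul_mulVec, ← mulVec_mulVec, ← mulVec_mulVec, vecMulVec_mulVec]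
  simp only [dotProduct_sub, dotProduct_smul, mulVec_smul, op_smul_eq_smul, smul_eq_mul, hvAu]
  ring

lemma isSymm_deflate {A : Matrix k k ℝ} (hA : A.IsSymm) (u : k → ℝ) : (deflate A u).IsSymm := by
  simp only [deflate, IsSymm, transpose_sub, transpose_smul, transpose_mul, transpose_vecMulVec,
    hA.eq, Matrix.mul_assoc]

lemma posSemidef_deflate {A : Matrix k k ℝ} (hA : A.PosSemidef) (u : k → ℝ) :
    (deflate A u).PosSemidef := by
  have hsymm : A.IsSymm := isHermitian_iff_isSymm.1 hA.isHermitian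
  refine .of_dotProduct_mulVec_nonneg (isHermitian_iff_isSymm.2 (isSymm_deflate hsymm u))
    fun v => ?_
  rw [star_trivial, dotProduct_deflate_mulVec hsymm, sub_nonneg]
  rcases (dotProduct_mulVec_self_nonneg hA u).eq_or_lt with hu | hu
  · simpa only [← hu, _root_.inv_zero, zero_mul] using dotProduct_mulVec_self_nonneg hA v
  · rw [inv_mul_le_iff₀ hu, mul_comm]
    exact dotProduct_mulVec_sq_le hA v u

lemma dotProduct_deflate_mulVec_self {A : Matrix k k ℝ} (hA : A.IsSymm) (u : k → ℝ) :
    u ⬝ᵥ deflate A u *ᵥ u = 0 := by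
  rw [dotProduct_deflate_mulVec hA, sub_eq_zero, sq, ← mul_assoc]
  exact (inv_mul_mul_self _).symm

lemma Btil_eq_deflate {p : ℕ} (S : Matrix (Fin p) (Fin p) ℝ) :
    Btil S = deflate S⁻¹ (fun _ => 1) := by
  have hJ : Jmat p = vecMulVec (fun _ => 1) (fun _ => 1) := by
    ext i j
    simp only [Jmat, of_apply, vecMulVec_apply, mul_one]
  rw [Btil, deflate, hJ]

lemma posSemidef_Btil {p : ℕ} {S : Matrix (Fin p) (Fin p) ℝ} (hS : S.PosDef) :
    (Btil S).PosSemidef :=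
  Btil_eq_deflate S ▸ posSemidef_deflate hS.inv.posSemidef _

lemma isSymm_Btil {p : ℕ} {S : Matrix (Fin p) (Fin p) ℝ} (hS : S.IsSymm) : (Btil S).IsSymm :=
  Btil_eq_deflate S ▸ isSymm_deflate hS.inv _

end Deflation

section Centering

lemma Bmat_apply {t : ℕ} (i j : Fin t) :
    Bmat t i j = (if i = j then 1 else 0) - (t : ℝ)⁻¹ := by
  simp only [Bmat, Jmat, Matrix.sub_apply, Matrix.smul_apply, of_apply, one_apply, smul_eq_mul,
    mul_one]

lemma Bmat_mulVec_eq_self {t : ℕ} {v : Fin t → ℝ} (hv : ∑ i, v i = 0) : Bmat t *ᵥ v = v := by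
  have hJ : Jmat t *ᵥ v = 0 := by
    ext i
    simp only [Jmat, mulVec, dotProduct, of_apply, one_mul, hv, Pi.zero_apply]
  rw [Bmat, sub_mulVec, smul_mulVec, hJ, smul_zero, sub_zero, one_mulVec]

lemma Bmat_mul_self (t : ℕ) : Bmat t * Bmat t = Bmat t := by
  have hcol (j : Fin t) : ∑ i, Bmat t i j = 0 := by
    have : (t : ℝ) ≠ 0 := Nat.cast_ne_zero.2 j.pos.ne'
    simp only [Bmat_apply, Finset.sum_sub_distrib, Finset.sum_ite_eq', Finset.mem_univ, if_true,
      Finset.sum_const, Finset.card_univ, Fintype.card_fin, nsmul_eq_mul, mul_inv_cancel₀ this,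
      sub_self]
  ext i j
  exact congrFun (Bmat_mulVec_eq_self (hcol j)) i

/-- Simultaneous permutations act transitively on the diagonal and on the off-diagonal positions,
so only two entries are free; the zero row sums fix their ratio. -/
lemma smul_eq_trace_smul_Bmat {t : ℕ} {M : Matrix (Fin t) (Fin t) ℝ}
    (hperm : ∀ (σ : Equiv.Perm (Fin t)) (i j : Fin t), M (σ i) (σ j) = M i j)
    (hrow : ∀ i, ∑ j, M i j = 0) : ((t : ℝ) - 1) • M = M.trace • Bmat t := by
  ext i j
  have ht : (t : ℝ) ≠ 0 := Nat.cast_ne_zero.2 i.pos.ne'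
  have hdiag (k : Fin t) : M k k = M i i := by
    simpa only [Equiv.swap_apply_left] using hperm (Equiv.swap i k) i i
  have htrace : M.trace = t * M i i := by
    simp only [trace, diag_apply, hdiag, Finset.sum_const, Finset.card_univ, Fintype.card_fin,
      nsmul_eq_mul]
  rw [Matrix.smul_apply, Matrix.smul_apply, htrace, smul_eq_mul, smul_eq_mul]
  rcases eq_or_ne i j with rfl | hij
  · rw [Bmat_apply, if_pos rfl]
    field_simp
  · have hoff : ∀ k ∈ Finset.univ.erase i, M i k = M i j := fun k hk => by
      simpa only [Equiv.swap_apply_of_ne_of_ne hij (Finset.ne_of_mem_erase hk).symm,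
        Equiv.swap_apply_left] using hperm (Equiv.swap j k) i j
    have hsum : M i i + (t - 1) * M i j = 0 := by
      rw [← hrow i, ← Finset.add_sum_erase _ _ (Finset.mem_univ i), Finset.sum_congr rfl hoff,
        Finset.sum_const, Finset.card_erase_of_mem (Finset.mem_univ i), Finset.card_univ,
        Fintype.card_fin, nsmul_eq_mul, Nat.cast_pred i.pos]
    rw [Bmat_apply, if_neg hij]
    field_simp
    linarith

end Centering

section WeightedCovariance

variable {ι m k : Type*} [Fintype ι] [Fintype m] {w : ι → ℝ} {M : Matrix m m ℝ}

/-- The covariance `∑ w_s X_s' M Y_s - (∑ w_s X_s)' M (∑ w_s Y_s)`, in the inner product `M`, of two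
families of matrices under the weights `w`. -/
def weightedCov (w : ι → ℝ) (M : Matrix m m ℝ) (X Y : ι → Matrix m k ℝ) : Matrix k k ℝ :=
  ∑ s, w s • ((X s)ᵀ * M * Y s) - (∑ s, w s • X s)ᵀ * M * ∑ s, w s • Y s

lemma transpose_weightedCov (hM : M.IsSymm) (X Y : ι → Matrix m k ℝ) :
    (weightedCov w M X Y)ᵀ = weightedCov w M Y X := by
  simp only [weightedCov, transpose_sub, transpose_sum, transpose_smul, transpose_mul,
    transpose_transpose, hM.eq, Matrix.mul_assoc]

lemma weightedCov_add_smul_right (X Y Z : ι → Matrix m k ℝ) (x : ℝ) :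
    weightedCov w M X (fun s => Y s + x • Z s) =
      weightedCov w M X Y + x • weightedCov w M X Z := by
  simp only [weightedCov, smul_add, Finset.sum_add_distrib, smul_comm (w _) x, ← Finset.smul_sum,
    Matrix.mul_add, Matrix.mul_smul, smul_sub]
  abel

lemma weightedCov_add_smul_left (hM : M.IsSymm) (X Y Z : ι → Matrix m k ℝ) (x : ℝ) :
    weightedCov w M (fun s => X s + x • Y s) Z =
      weightedCov w M X Z + x • weightedCov w M Y Z := by
  rw [← transpose_weightedCov hM, weightedCov_add_smul_right, transpose_add, transpose_smul,
    transpose_weightedCov hM, transpose_weightedCov hM]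

lemma weightedCov_eq_sum_of_sum_mul_eq_zero (X : ι → Matrix m k ℝ) {Y : ι → Matrix m k ℝ}
    (hY : ∑ s, w s • (M * Y s) = 0) :
    weightedCov w M X Y = ∑ s, w s • ((X s)ᵀ * M * Y s) := by
  have hMY : M * ∑ s, w s • Y s = 0 := by
    simpa only [Matrix.mul_sum, Matrix.mul_smul] using hY
  rw [weightedCov, Matrix.mul_assoc, hMY, Matrix.mul_zero, sub_zero]

lemma weightedCov_self_eq_sum_sub (hw : ∑ s, w s = 1) (X : ι → Matrix m k ℝ) :
    weightedCov w M X X =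
      ∑ s, w s • ((X s - ∑ r, w r • X r)ᵀ * M * (X s - ∑ r, w r • X r)) := by
  set A := ∑ r, w r • X r with hA
  have hcross₁ : ∑ s, w s • (Aᵀ * M * X s) = Aᵀ * M * A := by
    simp only [hA, Matrix.mul_sum, Matrix.mul_smul]
  have hcross₂ : ∑ s, w s • ((X s)ᵀ * M * A) = Aᵀ * M * A := by
    simp only [← smul_mul, ← transpose_smul, ← Matrix.sum_mul, ← transpose_sum, ← hA]
  simp only [transpose_sub, Matrix.sub_mul, Matrix.mul_sub, smul_sub, Finset.sum_sub_distrib,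
    hcross₁, hcross₂, ← Finset.sum_smul, hw, one_smul, weightedCov, ← hA]
  abel

lemma posSemidef_weightedCov_self [Finite k] (hM : M.PosSemidef) (hw₀ : ∀ s, 0 ≤ w s)
    (hw₁ : ∑ s, w s = 1) (X : ι → Matrix m k ℝ) : (weightedCov w M X X).PosSemidef := by
  cases nonempty_fintype k
  rw [weightedCov_self_eq_sum_sub hw₁]
  refine posSemidef_sum _ fun s _ => .smul ?_ (hw₀ s)
  simpa only [conjTranspose_eq_transpose_of_trivial] using
    hM.conjTranspose_mul_mul_same (X s - ∑ r, w r • X r)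

lemma dotProduct_weightedCov_self_mulVec_le [Fintype k] (hM : M.PosSemidef)
    (X : ι → Matrix m k ℝ) (v : k → ℝ) :
    v ⬝ᵥ weightedCov w M X X *ᵥ v ≤ v ⬝ᵥ (∑ s, w s • ((X s)ᵀ * M * X s)) *ᵥ v := by
  rw [weightedCov, sub_mulVec, dotProduct_sub, sub_le_self_iff, dotProduct_transpose_mul_mul_mulVec]
  exact dotProduct_mulVec_self_nonneg hM _

end WeightedCovariance

section RayleighQuotients

variable {k : Type*} [Fintype k]

/-- The Rayleigh quotient `τ' K τ / τ' τ`, with the junk value `0` at `τ = 0`. -/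
def rayleigh (K : Matrix k k ℝ) (τ : k → ℝ) : ℝ := (τ ⬝ᵥ K *ᵥ τ) / (τ ⬝ᵥ τ)

/-- The values of the quadratic form `M` on unit contrasts, a contrast being a vector whose
coordinates sum to zero. -/
def contrastValues (M : Matrix k k ℝ) : Set ℝ :=
  {v : ℝ | ∃ l : k → ℝ, (∑ i, l i) = 0 ∧ l ⬝ᵥ l = 1 ∧ v = l ⬝ᵥ (M *ᵥ l)}

/-- The smallest value of the quadratic form `M` on unit contrasts, the quantity that the
E-criterion averages; `0` if there are no unit contrasts. -/
def contrastMin (M : Matrix k k ℝ) : ℝ := sInf (contrastValues M)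

lemma isCompact_dotProduct_self_eq_one : IsCompact {l : k → ℝ | l ⬝ᵥ l = 1} := by
  refine (isCompact_Icc (a := fun _ : k => (-1 : ℝ)) (b := fun _ => 1)).of_isClosed_subset
    (isClosed_eq (by fun_prop) continuous_const) fun l (hl : l ⬝ᵥ l = 1) => ?_
  have habs (i : k) : |l i| ≤ 1 := abs_le_one_iff_mul_self_le_one.2 <|
    hl ▸ Finset.single_le_sum (f := fun i => l i * l i) (fun _ _ => mul_self_nonneg _)
      (Finset.mem_univ i)
  exact ⟨fun i => (abs_le.1 (habs i)).1, fun i => (abs_le.1 (habs i)).2⟩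

lemma bddBelow_contrastValues (M : Matrix k k ℝ) : BddBelow (contrastValues M) := by
  have hcont : Continuous fun l : k → ℝ => l ⬝ᵥ M *ᵥ l := by fun_prop
  refine (isCompact_dotProduct_self_eq_one.image hcont).bddBelow.mono ?_
  rintro v ⟨l, -, hl, rfl⟩
  exact ⟨l, hl, rfl⟩

lemma rayleigh_mem_contrastValues (M : Matrix k k ℝ) {τ : k → ℝ} (hsum : ∑ i, τ i = 0)
    (hτ : τ ≠ 0) : rayleigh M τ ∈ contrastValues M := by
  have hpos : 0 < τ ⬝ᵥ τ := dotProduct_self_pos_of_ne_zero hτ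
  have hsq : (√(τ ⬝ᵥ τ))⁻¹ * (√(τ ⬝ᵥ τ))⁻¹ = (τ ⬝ᵥ τ)⁻¹ := by
    rw [← mul_inv, Real.mul_self_sqrt hpos.le]
  refine ⟨(√(τ ⬝ᵥ τ))⁻¹ • τ, ?_, ?_, ?_⟩
  · simp only [Pi.smul_apply, ← Finset.smul_sum, hsum, smul_zero]
  · rw [smul_dotProduct, dotProduct_smul, smul_smul, hsq, smul_eq_mul, inv_mul_cancel₀ hpos.ne']
  · rw [mulVec_smul, smul_dotProduct, dotProduct_smul, smul_smul, hsq, smul_eq_mul, rayleigh,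
      div_eq_inv_mul]

lemma contrastMin_le_rayleigh (M : Matrix k k ℝ) {τ : k → ℝ} (hsum : ∑ i, τ i = 0)
    (hτ : τ ≠ 0) : contrastMin M ≤ rayleigh M τ :=
  csInf_le (bddBelow_contrastValues M) (rayleigh_mem_contrastValues M hsum hτ)

lemma rayleigh_le_rayleigh {M K : Matrix k k ℝ} {τ : k → ℝ} (h : τ ⬝ᵥ M *ᵥ τ ≤ τ ⬝ᵥ K *ᵥ τ) :
    rayleigh M τ ≤ rayleigh K τ :=
  div_le_div_of_nonneg_right h (by simpa only [star_trivial] using dotProduct_star_self_nonneg τ)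

lemma contrastMin_smul_Bmat_add {t : ℕ} {K : Matrix (Fin t) (Fin t) ℝ} {τ : Fin t → ℝ}
    (hK : K.PosSemidef) (hKτ : τ ⬝ᵥ K *ᵥ τ = 0) (hsum : ∑ i, τ i = 0) (hτ : τ ≠ 0) (y : ℝ) :
    contrastMin (y • Bmat t + K) = y := by
  have hform {l : Fin t → ℝ} (hl : ∑ i, l i = 0) :
      l ⬝ᵥ (y • Bmat t + K) *ᵥ l = y * (l ⬝ᵥ l) + l ⬝ᵥ K *ᵥ l := by
    rw [add_mulVec, smul_mulVec, Bmat_mulVec_eq_self hl, dotProduct_add, dotProduct_smul,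
      smul_eq_mul]
  apply le_antisymm
  · refine (contrastMin_le_rayleigh _ hsum hτ).trans_eq ?_
    rw [rayleigh, hform hsum, hKτ, add_zero,
      mul_div_cancel_right₀ _ (dotProduct_self_pos_of_ne_zero hτ).ne']
  · refine le_csInf ⟨_, rayleigh_mem_contrastValues _ hsum hτ⟩ ?_
    rintro _ ⟨l, hl, hunit, rfl⟩
    rw [hform hl, hunit, mul_one]
    exact le_add_of_nonneg_right (dotProduct_mulVec_self_nonneg hK l)

end RayleighQuotients

section NormalizedSecondMoment

variable {k : Type*} [Fintype k] {g : Measure (k → ℝ)}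

/-- The mean of `τ τ' / |τ|²`: it determines the mean Rayleigh quotient of every matrix. -/
def normalizedSecondMoment (g : Measure (k → ℝ)) : Matrix k k ℝ :=
  of fun i j => ∫ τ, τ i * τ j / (τ ⬝ᵥ τ) ∂g

lemma abs_mul_div_dotProduct_self_le_one (τ : k → ℝ) (i j : k) :
    |τ i * τ j / (τ ⬝ᵥ τ)| ≤ 1 := by
  have hcoord (i : k) : |τ i| ≤ √(τ ⬝ᵥ τ) := Real.abs_le_sqrt <| by
    rw [sq]
    exact Finset.single_le_sum (f := fun i => τ i * τ i) (fun _ _ => mul_self_nonneg _)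
      (Finset.mem_univ i)
  have hnonneg : 0 ≤ τ ⬝ᵥ τ := by simpa only [star_trivial] using dotProduct_star_self_nonneg τ
  rw [abs_div, abs_mul, abs_of_nonneg hnonneg]
  refine div_le_one_of_le₀ ?_ hnonneg
  calc |τ i| * |τ j| ≤ √(τ ⬝ᵥ τ) * √(τ ⬝ᵥ τ) :=
        mul_le_mul (hcoord i) (hcoord j) (abs_nonneg _) (Real.sqrt_nonneg _)
    _ = τ ⬝ᵥ τ := Real.mul_self_sqrt hnonneg

lemma measurable_mul_div_dotProduct_self (i j : k) :
    Measurable fun τ : k → ℝ => τ i * τ j / (τ ⬝ᵥ τ) := by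
  unfold dotProduct
  fun_prop

lemma integrable_mul_div_dotProduct_self [IsFiniteMeasure g] (i j : k) :
    Integrable (fun τ => τ i * τ j / (τ ⬝ᵥ τ)) g :=
  .of_bound (measurable_mul_div_dotProduct_self i j).aestronglyMeasurable 1
    (.of_forall fun τ => abs_mul_div_dotProduct_self_le_one τ i j)

lemma rayleigh_eq_sum (K : Matrix k k ℝ) (τ : k → ℝ) :
    rayleigh K τ = ∑ i, ∑ j, K i j * (τ j * τ i / (τ ⬝ᵥ τ)) := by
  simp only [rayleigh, dotProduct, mulVec, Finset.mul_sum, Finset.sum_div]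
  exact Finset.sum_congr rfl fun i _ => Finset.sum_congr rfl fun j _ => by ring

lemma integrable_rayleigh [IsFiniteMeasure g] (K : Matrix k k ℝ) : Integrable (rayleigh K) g := by
  rw [funext (rayleigh_eq_sum K)]
  exact integrable_finsetSum _ fun i _ => integrable_finsetSum _ fun j _ =>
    (integrable_mul_div_dotProduct_self j i).const_mul _

lemma integral_rayleigh [IsFiniteMeasure g] (K : Matrix k k ℝ) :
    ∫ τ, rayleigh K τ ∂g = (K * normalizedSecondMoment g).trace := by
  have hint (i j : k) : Integrable (fun τ => K i j * (τ j * τ i / (τ ⬝ᵥ τ))) g :=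
    (integrable_mul_div_dotProduct_self j i).const_mul _
  simp only [rayleigh_eq_sum, integral_finsetSum _ fun i _ => integrable_finsetSum _ fun j _ =>
    hint i j, integral_finsetSum _ fun j _ => hint _ j, integral_const_mul, trace, diag_apply,
    mul_apply, normalizedSecondMoment, of_apply]

lemma normalizedSecondMoment_perm {σ : Equiv.Perm k}
    (hσ : Measure.map (fun τ i => τ (σ i)) g = g) (i j : k) :
    normalizedSecondMoment g (σ i) (σ j) = normalizedSecondMoment g i j := by
  have hdot (τ : k → ℝ) : (fun i => τ (σ i)) ⬝ᵥ (fun i => τ (σ i)) = τ ⬝ᵥ τ :=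
    Equiv.sum_comp σ fun i => τ i * τ i
  simp only [normalizedSecondMoment, of_apply]
  nth_rw 2 [← hσ]
  rw [integral_map (by fun_prop : Measurable fun (τ : k → ℝ) i => τ (σ i)).aemeasurable
    (measurable_mul_div_dotProduct_self i j).aestronglyMeasurable]
  simp only [hdot]

lemma sum_normalizedSecondMoment_eq_zero [IsFiniteMeasure g] (hg : ∀ᵐ τ ∂g, ∑ i, τ i = 0) (i : k) :
    ∑ j, normalizedSecondMoment g i j = 0 := by
  simp only [normalizedSecondMoment, of_apply]
  rw [← integral_finsetSum _ fun j _ => integrable_mul_div_dotProduct_self i j]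
  refine integral_eq_zero_of_ae (hg.mono fun τ hτ => ?_)
  simp only [← Finset.sum_div, ← Finset.mul_sum, hτ, mul_zero, zero_div, Pi.zero_apply]

lemma trace_normalizedSecondMoment [IsProbabilityMeasure g] (hg : ∀ᵐ τ ∂g, τ ≠ 0) :
    (normalizedSecondMoment g).trace = 1 := by
  simp only [trace, diag_apply, normalizedSecondMoment, of_apply]
  rw [← integral_finsetSum _ fun i _ => integrable_mul_div_dotProduct_self i i]
  have hone : (fun τ : k → ℝ => ∑ i, τ i * τ i / (τ ⬝ᵥ τ)) =ᵐ[g] fun _ => 1 :=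
    hg.mono fun τ hτ => by
      simp only [← Finset.sum_div]
      exact div_self (dotProduct_self_pos_of_ne_zero hτ).ne'
  rw [integral_congr_ae hone, integral_const, probReal_univ, one_smul]

end NormalizedSecondMoment

namespace IsExchangeablePrior

variable {t : ℕ} {g : Measure (Fin t → ℝ)}

lemma ae_contrast (hg : IsExchangeablePrior g) : ∀ᵐ τ ∂g, (∑ i, τ i) = 0 ∧ τ ≠ 0 :=
  ae_iff.2 hg.2.1

lemma one_lt (hg : IsExchangeablePrior g) : 1 < t := by
  have := hg.1
  obtain ⟨τ, hsum, hτ⟩ := hg.ae_contrast.exists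
  by_contra! ht
  have : Subsingleton (Fin t) := Fin.subsingleton_iff_le_one.2 ht
  exact hτ (funext fun i => (Fintype.sum_subsingleton τ i).symm.trans hsum)

lemma smul_normalizedSecondMoment (hg : IsExchangeablePrior g) :
    ((t : ℝ) - 1) • normalizedSecondMoment g = Bmat t := by
  have := hg.1
  rw [smul_eq_trace_smul_Bmat (fun σ => normalizedSecondMoment_perm (hg.2.2 σ))
      (sum_normalizedSecondMoment_eq_zero (hg.ae_contrast.mono fun _ => And.left)),
    trace_normalizedSecondMoment (hg.ae_contrast.mono fun _ => And.right), one_smul]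

lemma integral_rayleigh_eq_trace_div (hg : IsExchangeablePrior g) {K : Matrix (Fin t) (Fin t) ℝ}
    (hK : K * Bmat t = K) : ∫ τ, rayleigh K τ ∂g = K.trace / ((t : ℝ) - 1) := by
  have := hg.1
  have ht : (t : ℝ) - 1 ≠ 0 := sub_ne_zero.2 (Nat.cast_ne_one.2 hg.one_lt.ne')
  rw [integral_rayleigh, eq_div_iff ht, mul_comm, ← smul_eq_mul, ← trace_smul, ← Matrix.mul_smul,
    hg.smul_normalizedSecondMoment, hK]

end IsExchangeablePrior

section Information

variable {p t n : ℕ} {S : Matrix (Fin p) (Fin p) ℝ} {w : TrtSeq p t → ℝ}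

/-- The centered incidence matrix `G_i(s) B_t` of the direct (`i = 0`) or the carryover (`i = 1`)
effects, through which all information matrices depend on the sequence `s`. -/
def effectRegressor (i : Fin 2) (s : TrtSeq p t) : Matrix (Fin p) (Fin t) ℝ := Gmat i s * Bmat t

/-- The regressor `(T_s + x F_s) B_t` of the direct effects when each carryover effect is known to
be `x` times the direct effect. -/
def propRegressor (x : ℝ) (s : TrtSeq p t) : Matrix (Fin p) (Fin t) ℝ :=
  effectRegressor 0 s + x • effectRegressor 1 s

/-- The information matrix `n ∑_s p_s B_t (T_s + x F_s)' B̃ (T_s + x F_s) B_t` of the direct effects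
when each carryover effect is known to be `x` times the direct effect, before the correction for
the estimation of period effects. -/
def uncorrectedInfo (n : ℕ) (S : Matrix (Fin p) (Fin p) ℝ) (w : TrtSeq p t → ℝ) (x : ℝ) :
    Matrix (Fin t) (Fin t) ℝ :=
  (n : ℝ) • ∑ s, w s • ((propRegressor x s)ᵀ * Btil S * propRegressor x s)

lemma propRegressor_eq (x : ℝ) (s : TrtSeq p t) :
    propRegressor x s = (Tmat s + x • Fmat s) * Bmat t := by
  rw [Matrix.add_mul, smul_mul]
  rfl

lemma propRegressor_mul_Bmat (x : ℝ) (s : TrtSeq p t) :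
    propRegressor x s * Bmat t = propRegressor x s := by
  rw [propRegressor_eq, Matrix.mul_assoc, Bmat_mul_self]

lemma Chat_eq (i j : Fin 2) (s : TrtSeq p t) :
    Chat S s i j = (effectRegressor i s)ᵀ * Btil S * effectRegressor j s := by
  simp only [Chat, effectRegressor, transpose_mul, (isSymm_Bmat t).eq, Matrix.mul_assoc]

lemma transpose_Chat (hS : S.IsSymm) (i j : Fin 2) (s : TrtSeq p t) :
    (Chat S s i j)ᵀ = Chat S s j i := by
  simp only [Chat_eq, transpose_mul, transpose_transpose, (isSymm_Btil hS).eq, Matrix.mul_assoc]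

lemma Chat_add_smul_Chat (i : Fin 2) (x : ℝ) (s : TrtSeq p t) :
    Chat S s i 0 + x • Chat S s i 1 = (effectRegressor i s)ᵀ * Btil S * propRegressor x s := by
  rw [Chat_eq, Chat_eq, propRegressor, Matrix.mul_add, Matrix.mul_smul]

lemma qSeq_eq_trace (hS : S.IsSymm) (s : TrtSeq p t) (x : ℝ) :
    qSeq S s x = ((propRegressor x s)ᵀ * Btil S * propRegressor x s).trace := by
  have hswap : (Chat S s 1 0).trace = (Chat S s 0 1).trace := by
    rw [← transpose_Chat hS, trace_transpose]
  have hexpand : (propRegressor x s)ᵀ * Btil S * propRegressor x s =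
      (Chat S s 0 0 + x • Chat S s 0 1) + x • (Chat S s 1 0 + x • Chat S s 1 1) := by
    simp only [Chat_add_smul_Chat]
    nth_rw 1 [propRegressor]
    rw [transpose_add, transpose_smul, Matrix.add_mul, Matrix.add_mul, smul_mul, smul_mul]
  simp only [hexpand, trace_add, trace_smul, hswap, qSeq, cseq, smul_eq_mul]
  ring

lemma CD_eq_smul_weightedCov (i j : Fin 2) :
    CD n S w i j =
      (n : ℝ) • weightedCov w (Btil S) (effectRegressor i) (effectRegressor j) := by
  simp only [CD, ChatD, Chat_eq, weightedCov, smul_sub, effectRegressor]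

lemma transpose_CD (hS : S.IsSymm) (i j : Fin 2) : (CD n S w i j)ᵀ = CD n S w j i := by
  rw [CD_eq_smul_weightedCov, CD_eq_smul_weightedCov, transpose_smul,
    transpose_weightedCov (isSymm_Btil hS)]

lemma dotProduct_CD_mulVec_comm (hS : S.IsSymm) (i j : Fin 2) (u v : Fin t → ℝ) :
    u ⬝ᵥ CD n S w i j *ᵥ v = v ⬝ᵥ CD n S w j i *ᵥ u := by
  rw [← transpose_CD hS, dotProduct_transpose_mulVec]

lemma posSemidef_CD_self (hS : S.PosDef) (hw : IsDesign w) (i : Fin 2) :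
    (CD n S w i i).PosSemidef := by
  rw [CD_eq_smul_weightedCov]
  exact (posSemidef_weightedCov_self (posSemidef_Btil hS) hw.1 hw.2 _).smul n.cast_nonneg

lemma CD_add_smul_CD (i : Fin 2) (x : ℝ) :
    CD n S w i 0 + x • CD n S w i 1 =
      (n : ℝ) • weightedCov w (Btil S) (effectRegressor i) (propRegressor x) := by
  simp only [CD_eq_smul_weightedCov, smul_comm x, ← smul_add, ← weightedCov_add_smul_right]
  rfl

lemma CD_pencil (hS : S.IsSymm) (x : ℝ) :
    (CD n S w 0 0 + x • CD n S w 0 1) + x • (CD n S w 1 0 + x • CD n S w 1 1) =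
      (n : ℝ) • weightedCov w (Btil S) (propRegressor x) (propRegressor x) := by
  simp only [CD_add_smul_CD, smul_comm x, ← smul_add,
    ← weightedCov_add_smul_left (isSymm_Btil hS)]
  rfl

end Information

section UpperBound

variable {p t n : ℕ} {S : Matrix (Fin p) (Fin p) ℝ} {w : TrtSeq p t → ℝ}

lemma schur_complement_le_pencil {d : ℝ} (hd : 0 < d) (a b l x : ℝ) :
    a + 2 * l * b + l ^ 2 * d - d⁻¹ * (b + l * d) ^ 2 ≤ a + x * b + x * (b + x * d) := by
  have hgap : a + x * b + x * (b + x * d) -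
      (a + 2 * l * b + l ^ 2 * d - d⁻¹ * (b + l * d) ^ 2) = d⁻¹ * (b + x * d) ^ 2 := by
    field_simp
    ring
  exact sub_nonneg.1 (hgap ▸ by positivity)

lemma dotProduct_CInfo_mulVec_self (hS : S.IsSymm) (τ : Fin t → ℝ) (l0 : ℝ) :
    τ ⬝ᵥ CInfo n S w τ l0 *ᵥ τ =
      τ ⬝ᵥ CD n S w 0 0 *ᵥ τ + 2 * l0 * (τ ⬝ᵥ CD n S w 0 1 *ᵥ τ) +
        l0 ^ 2 * (τ ⬝ᵥ CD n S w 1 1 *ᵥ τ) - (τ ⬝ᵥ CD n S w 1 1 *ᵥ τ)⁻¹ *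
          (τ ⬝ᵥ CD n S w 0 1 *ᵥ τ + l0 * (τ ⬝ᵥ CD n S w 1 1 *ᵥ τ)) ^ 2 := by
  simp only [CInfo, sub_mulVec, add_mulVec, smul_mulVec, ← mulVec_mulVec, vecMulVec_mulVec,
    dotProduct_sub, dotProduct_add, dotProduct_smul, mulVec_add, mulVec_smul, op_smul_eq_smul,
    smul_eq_mul, dotProduct_CD_mulVec_comm hS 1 0]
  ring

lemma dotProduct_CInfo_mulVec_self_le (hS : S.IsSymm) {τ : Fin t → ℝ}
    (hτ : 0 < τ ⬝ᵥ CD n S w 1 1 *ᵥ τ) (l0 x : ℝ) :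
    τ ⬝ᵥ CInfo n S w τ l0 *ᵥ τ ≤
      τ ⬝ᵥ ((n : ℝ) • weightedCov w (Btil S) (propRegressor x) (propRegressor x)) *ᵥ τ := by
  rw [dotProduct_CInfo_mulVec_self hS, ← CD_pencil hS]
  simp only [add_mulVec, smul_mulVec, dotProduct_add, dotProduct_smul, smul_eq_mul,
    dotProduct_CD_mulVec_comm hS 1 0]
  exact schur_complement_le_pencil hτ _ _ l0 x

lemma mD_eq_contrastMin (l0 : ℝ) (τ : Fin t → ℝ) :
    mD n S w l0 τ = contrastMin (CInfo n S w τ l0) :=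
  rfl

lemma mD_le_rayleigh_uncorrectedInfo (hS : S.PosDef) {τ : Fin t → ℝ} (hsum : ∑ i, τ i = 0)
    (hτ : 0 < τ ⬝ᵥ CD n S w 1 1 *ᵥ τ) (l0 x : ℝ) :
    mD n S w l0 τ ≤ rayleigh (uncorrectedInfo n S w x) τ := by
  have hne : τ ≠ 0 := by
    rintro rfl
    simp only [zero_dotProduct, lt_self_iff_false] at hτ
  have hsymm : S.IsSymm := isHermitian_iff_isSymm.1 hS.isHermitian
  rw [mD_eq_contrastMin]
  refine (contrastMin_le_rayleigh _ hsum hne).trans (rayleigh_le_rayleigh ?_)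
  refine (dotProduct_CInfo_mulVec_self_le hsymm hτ l0 x).trans ?_
  rw [uncorrectedInfo, smul_mulVec, smul_mulVec, dotProduct_smul, dotProduct_smul]
  exact smul_le_smul_of_nonneg_left
    (dotProduct_weightedCov_self_mulVec_le (posSemidef_Btil hS) _ τ) n.cast_nonneg

lemma uncorrectedInfo_mul_Bmat (x : ℝ) :
    uncorrectedInfo n S w x * Bmat t = uncorrectedInfo n S w x := by
  simp only [uncorrectedInfo, smul_mul, Matrix.sum_mul, Matrix.mul_assoc, propRegressor_mul_Bmat]

lemma trace_uncorrectedInfo (hS : S.IsSymm) (x : ℝ) :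
    (uncorrectedInfo n S w x).trace = n * qD S w x := by
  simp only [uncorrectedInfo, trace_smul, trace_sum, ← qSeq_eq_trace hS, qD, smul_eq_mul]

lemma Ecrit_le_of_EAdmissible (hS : S.PosDef) {g : Measure (Fin t → ℝ)}
    (hg : IsExchangeablePrior g) {l0 : ℝ} (hw : EAdmissible n S g l0 w) (x : ℝ) :
    Ecrit n S g l0 w ≤ n * qD S w x / ((t : ℝ) - 1) := by
  have := hg.1
  calc Ecrit n S g l0 w ≤ ∫ τ, rayleigh (uncorrectedInfo n S w x) τ ∂g := by
        refine integral_mono_ae hw.2.2 (integrable_rayleigh _) ?_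
        filter_upwards [hg.ae_contrast, hw.2.1] with τ hcontrast hτ
        exact mD_le_rayleigh_uncorrectedInfo hS hcontrast.1 hτ l0 x
    _ = n * qD S w x / ((t : ℝ) - 1) := by
        rw [hg.integral_rayleigh_eq_trace_div (uncorrectedInfo_mul_Bmat x),
          trace_uncorrectedInfo (isHermitian_iff_isSymm.1 hS.isHermitian)]

lemma qD_le_of_forall_qSeq_le (hw : IsDesign w) {x y : ℝ}
    (hq : ∀ s : TrtSeq p t, qSeq S s x ≤ y) : qD S w x ≤ y :=
  calc qD S w x ≤ ∑ s, w s * y :=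
        Finset.sum_le_sum fun s _ => mul_le_mul_of_nonneg_left (hq s) (hw.1 s)
    _ = y := by rw [← Finset.sum_mul, hw.2, one_mul]

end UpperBound

section KushnerConditions

variable {p t n : ℕ} {S : Matrix (Fin p) (Fin p) ℝ} {w : TrtSeq p t → ℝ}

lemma CD_add_smul_CD_eq_sum {x : ℝ}
    (h3 : ∑ s, w s • (Btil S * (Tmat s + x • Fmat s) * Bmat t) = 0) (i : Fin 2) :
    CD n S w i 0 + x • CD n S w i 1 =
      (n : ℝ) • ∑ s, w s • (Chat S s i 0 + x • Chat S s i 1) := by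
  have hsum : ∑ s, w s • (Btil S * propRegressor x s) = 0 := by
    simpa only [propRegressor_eq, Matrix.mul_assoc] using h3
  simp only [CD_add_smul_CD, weightedCov_eq_sum_of_sum_mul_eq_zero _ hsum, Chat_add_smul_Chat]

lemma CInfo_eq_smul_Bmat_add_deflate (hS : S.IsSymm) {x y : ℝ}
    (h1 : CD n S w 0 0 + x • CD n S w 0 1 = y • Bmat t)
    (h2 : CD n S w 1 0 + x • CD n S w 1 1 = 0) (τ : Fin t → ℝ) (l0 : ℝ) :
    CInfo n S w τ l0 = y • Bmat t + (l0 - x) ^ 2 • deflate (CD n S w 1 1) τ := by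
  have hCD10 : CD n S w 1 0 = -(x • CD n S w 1 1) := eq_neg_of_add_eq_zero_left h2
  have hCD01 : CD n S w 0 1 = -(x • CD n S w 1 1) := by
    rw [← transpose_CD hS, hCD10, transpose_neg, transpose_smul, transpose_CD hS]
  have hCD00 : CD n S w 0 0 = y • Bmat t + x ^ 2 • CD n S w 1 1 := by
    rw [← h1, hCD01, smul_neg, smul_smul, ← sq, neg_add_cancel_right]
  have hfactor : -(x • CD n S w 1 1) + l0 • CD n S w 1 1 = (l0 - x) • CD n S w 1 1 := by
    rw [sub_smul, neg_add_eq_sub]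
  rw [CInfo, hCD10, hCD01, hfactor, hCD00, deflate]
  simp only [smul_mul, Matrix.mul_smul]
  module

lemma mD_eq_of_CInfo_eq {τ : Fin t → ℝ} {l0 a y : ℝ} (hC : (CD n S w 1 1).PosSemidef)
    (hinfo : CInfo n S w τ l0 = y • Bmat t + a ^ 2 • deflate (CD n S w 1 1) τ)
    (hsum : ∑ i, τ i = 0) (hτ : τ ≠ 0) : mD n S w l0 τ = y := by
  rw [mD_eq_contrastMin, hinfo]
  refine contrastMin_smul_Bmat_add ((posSemidef_deflate hC τ).smul (sq_nonneg a)) ?_ hsum hτ y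
  rw [smul_mulVec, dotProduct_smul,
    dotProduct_deflate_mulVec_self (isHermitian_iff_isSymm.1 hC.isHermitian), smul_zero]

lemma Ecrit_eq_of_kushner (hS : S.PosDef) (hw : IsDesign w) {x y : ℝ}
    (h1 : ∑ s, w s • (Chat S s 0 0 + x • Chat S s 0 1) = (y / ((t : ℝ) - 1)) • Bmat t)
    (h2 : ∑ s, w s • (Chat S s 1 0 + x • Chat S s 1 1) = 0)
    (h3 : ∑ s, w s • (Btil S * (Tmat s + x • Fmat s) * Bmat t) = 0) (l0 : ℝ)
    {g : Measure (Fin t → ℝ)} (hg : IsExchangeablePrior g) :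
    Ecrit n S g l0 w = n * y / ((t : ℝ) - 1) := by
  have := hg.1
  have hsymm : S.IsSymm := isHermitian_iff_isSymm.1 hS.isHermitian
  have hdirect : CD n S w 0 0 + x • CD n S w 0 1 = (n * y / ((t : ℝ) - 1)) • Bmat t := by
    rw [CD_add_smul_CD_eq_sum h3, h1, smul_smul, mul_div_assoc]
  have hcarry : CD n S w 1 0 + x • CD n S w 1 1 = 0 := by
    rw [CD_add_smul_CD_eq_sum h3, h2, smul_zero]
  have hmD : mD n S w l0 =ᵐ[g] fun _ => n * y / ((t : ℝ) - 1) := by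
    filter_upwards [hg.ae_contrast] with τ hτ
    exact mD_eq_of_CInfo_eq (posSemidef_CD_self hS hw 1)
      (CInfo_eq_smul_Bmat_add_deflate hsymm hdirect hcarry τ l0) hτ.1 hτ.2
  rw [Ecrit, integral_congr_ae hmD, integral_const, probReal_univ, one_smul]

lemma qSeq_le_qMax (S : Matrix (Fin p) (Fin p) ℝ) (s : TrtSeq p t) (x : ℝ) :
    qSeq S s x ≤ qMax p t S x :=
  le_csSup (Set.finite_range _).bddAbove ⟨s, rfl⟩

lemma sum_filter_smul_eq_sum {ι R E : Type*} [Fintype ι] [Zero R] [AddCommMonoid E]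
    [SMulWithZero R E] {P : ι → Prop} [DecidablePred P] {w : ι → R}
    (hw : ∀ s, ¬ P s → w s = 0) (f : ι → E) :
    ∑ s ∈ Finset.univ.filter P, w s • f s = ∑ s, w s • f s :=
  Finset.sum_filter_of_ne fun s _ hs => by
    by_contra hP
    exact hs (by rw [hw s hP, zero_smul])

end KushnerConditions

/-- Here `(x, y)` plays the role of Kushner's `(x*, y*)`. -/
theorem stmt10_general {p t n : ℕ} {S : Matrix (Fin p) (Fin p) ℝ} (hS : S.PosDef) {x y : ℝ}
    (hq : ∀ s : TrtSeq p t, qSeq S s x ≤ y) {w : TrtSeq p t → ℝ} (hw : IsDesign w)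
    (h1 : ∑ s, w s • (Chat S s 0 0 + x • Chat S s 0 1) = (y / ((t : ℝ) - 1)) • Bmat t)
    (h2 : ∑ s, w s • (Chat S s 1 0 + x • Chat S s 1 1) = 0)
    (h3 : ∑ s, w s • (Btil S * (Tmat s + x • Fmat s) * Bmat t) = 0) (l0 : ℝ)
    (g : Measure (Fin t → ℝ)) (hg : IsExchangeablePrior g) : EOptimal n S g l0 w := by
  intro w' hw'
  have ht : (0 : ℝ) ≤ (t : ℝ) - 1 := sub_nonneg.2 (Nat.one_le_cast.2 hg.one_lt.le)
  calc Ecrit n S g l0 w' ≤ n * qD S w' x / ((t : ℝ) - 1) := Ecrit_le_of_EAdmissible hS hg hw' x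
    _ ≤ n * y / ((t : ℝ) - 1) := by
        gcongr
        exact qD_le_of_forall_qSeq_le hw'.1 hq
    _ = Ecrit n S g l0 w := (Ecrit_eq_of_kushner hS hw h1 h2 h3 l0 hg).symm

/-- a design satisfying Kushner's conditions for universal optimality
under the traditional model is `E_{g,λ0}`-optimal for the proportional model. -/
theorem stmt10 (p t n : ℕ) (hp : 2 ≤ p) (ht : 3 ≤ t) (hn : 1 ≤ n)
    (S : Matrix (Fin p) (Fin p) ℝ) (hS : S.PosDef)
    (xstar : ℝ) (hxs : qMax p t S xstar = yStar p t S)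
    (hxsu : ∀ x : ℝ, qMax p t S x = yStar p t S → x = xstar)
    (w : TrtSeq p t → ℝ) (hw : IsDesign w)
    (h1 : ∑ s ∈ Finset.univ.filter (fun s : TrtSeq p t => qSeq S s xstar = yStar p t S),
        w s • (Chat S s 0 0 + xstar • Chat S s 0 1) =
      (yStar p t S / ((t : ℝ) - 1)) • Bmat t)
    (h2 : ∑ s ∈ Finset.univ.filter (fun s : TrtSeq p t => qSeq S s xstar = yStar p t S),
        w s • (Chat S s 1 0 + xstar • Chat S s 1 1) = 0)
    (h3 : ∑ s ∈ Finset.univ.filter (fun s : TrtSeq p t => qSeq S s xstar = yStar p t S),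
        w s • (Btil S * (Tmat s + xstar • Fmat s) * Bmat t) = 0)
    (h4 : ∑ s ∈ Finset.univ.filter (fun s : TrtSeq p t => qSeq S s xstar = yStar p t S),
        w s = 1)
    (h5 : ∀ s : TrtSeq p t, qSeq S s xstar ≠ yStar p t S → w s = 0) :
    ∀ (l0 : ℝ) (g : Measure (Fin t → ℝ)), IsExchangeablePrior g →
      EOptimal n S g l0 w := by
  rw [sum_filter_smul_eq_sum h5] at h1 h2 h3
  exact stmt10_general hS (fun s => hxs ▸ qSeq_le_qMax S s xstar) hw h1 h2 h3
end
end
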